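/- arXiv:1707.06417 — 3 statements merged into one kernel-verified Lean document; each statement's English description precedes it below -/
import Mathlib

section
/- Let p be a prime and Γ a finite abelian group, endowed with the discrete topology, whose order is not divisible by p. Then the map sending a continuous group homomorphism f : ℚ_pˣ → Γ to the pair (f(p), f restricted to the torsion subgroup of ℤ_pˣ) is a bijection from the set of continuous group homomorphisms ℚ_pˣ → Γ onto the product of Γ with the set of group homomorphisms from the torsion subgroup of ℤ_pˣ to Γ. -/
section
open Polynomial

noncomputable def redHom (p : ℕ) [Fact p.Prime] : ℤ_[p]ˣ →* (ZMod p)ˣ :=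
  Units.map (PadicInt.toZMod (p := p)).toMonoidHom

lemma toZMod_eq_iff {p : ℕ} [Fact p.Prime] (x y : ℤ_[p]) :
    PadicInt.toZMod x = PadicInt.toZMod y ↔ ‖x - y‖ < 1 := by
  rw [← sub_eq_zero, ← map_sub, ← RingHom.mem_ker, PadicInt.ker_toZMod,
    IsLocalRing.mem_maximalIdeal, PadicInt.mem_nonunits]

lemma redHom_eq_iff {p : ℕ} [Fact p.Prime] (x y : ℤ_[p]ˣ) :
    redHom p x = redHom p y ↔ ‖(x : ℤ_[p]) - y‖ < 1 := by
  rw [← toZMod_eq_iff, Units.ext_iff]; rfl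

lemma eq_one_of_pow {p : ℕ} [Fact p.Prime] (s : ℤ_[p]ˣ) (hs : redHom p s = 1) (m : ℕ)
    (hm : ¬ p ∣ m) (h : s ^ m = 1) : s = 1 := by
  have h1 : (s : ℤ_[p]) ^ m = 1 := by rw [← Units.val_pow_eq_pow_val, h, Units.val_one]
  have hr : PadicInt.toZMod (s : ℤ_[p]) = 1 := congrArg Units.val hs
  have h2 := geom_sum_mul (s : ℤ_[p]) m
  rw [h1, sub_self] at h2
  rcases mul_eq_zero.mp h2 with h3 | h3
  · exfalso
    have := congrArg PadicInt.toZMod h3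
    simp [hr] at this
    exact hm ((ZMod.natCast_eq_zero_iff m p).mp this)
  · exact Units.ext (sub_eq_zero.mp h3)

lemma exists_teich {p : ℕ} [hp : Fact p.Prime] (u : ℤ_[p]ˣ) :
    ∃ z : ℤ_[p]ˣ, z ^ (p - 1) = 1 ∧ redHom p z = redHom p u := by
  have hp1 : p - 1 ≠ 0 := Nat.sub_ne_zero_of_lt hp.out.one_lt
  have hd : ‖(derivative (X ^ (p - 1) - 1 : ℤ_[p][X])).aeval (u : ℤ_[p])‖ = 1 := by
    have : ‖((p - 1 : ℕ) : ℤ_[p])‖ = 1 := PadicInt.norm_natCast_p_sub_one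
    simp [derivative_X_pow, this]
  have hF : ‖(X ^ (p - 1) - 1 : ℤ_[p][X]).aeval (u : ℤ_[p])‖ < 1 := by
    simp only [map_sub, map_pow, aeval_X, map_one]
    rw [← toZMod_eq_iff, map_pow, map_one]
    exact ZMod.pow_card_sub_one_eq_one ((u.isUnit.map PadicInt.toZMod).ne_zero)
  obtain ⟨z, hz, hzu, -⟩ := hensels_lemma (F := (X ^ (p - 1) - 1 : ℤ_[p][X])) (a := (u : ℤ_[p]))
    (by rw [hd, one_pow]; exact hF)
  rw [hd] at hzu
  have hz' : z ^ (p - 1) = 1 := by simpa [sub_eq_zero] using hz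
  refine ⟨Units.ofPowEqOne z (p - 1) hz' hp1, Units.ext (by simp [hz']), ?_⟩
  rw [redHom_eq_iff]; simpa using hzu

lemma not_dvd_pred {p : ℕ} [hp : Fact p.Prime] : ¬ p ∣ p - 1 := fun h =>
  absurd (Nat.le_of_dvd (Nat.sub_pos_of_lt hp.out.one_lt) h)
    (by have := hp.out.one_lt; omega)

noncomputable def teich (p : ℕ) [Fact p.Prime] : ℤ_[p]ˣ →* ℤ_[p]ˣ :=
  MonoidHom.mk' (fun u => (exists_teich u).choose) (by
    intro a b
    have ha := (exists_teich a).choose_spec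
    have hb := (exists_teich b).choose_spec
    have hab := (exists_teich (a * b)).choose_spec
    rw [← div_eq_one]
    refine eq_one_of_pow _ ?_ (p - 1) not_dvd_pred ?_
    · rw [_root_.map_div, hab.2, map_mul, map_mul, ha.2, hb.2, div_self']
    · rw [div_pow, mul_pow, hab.1, ha.1, hb.1]; simp)

lemma teich_pow {p : ℕ} [Fact p.Prime] (u : ℤ_[p]ˣ) : teich p u ^ (p - 1) = 1 :=
  (exists_teich u).choose_spec.1

lemma red_teich {p : ℕ} [Fact p.Prime] (u : ℤ_[p]ˣ) : redHom p (teich p u) = redHom p u :=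
  (exists_teich u).choose_spec.2

lemma teich_tors {p : ℕ} [hp : Fact p.Prime] (u : ℤ_[p]ˣ) :
    teich p u ∈ CommGroup.torsion ℤ_[p]ˣ :=
  isOfFinOrder_iff_pow_eq_one.mpr
    ⟨p - 1, Nat.sub_pos_of_lt hp.out.one_lt, teich_pow u⟩

lemma teich_one_unit {p : ℕ} [Fact p.Prime] (u : ℤ_[p]ˣ) (hu : redHom p u = 1) :
    teich p u = 1 :=
  eq_one_of_pow _ ((red_teich u).trans hu) (p - 1) not_dvd_pred (teich_pow u)

lemma tors_ppow {p : ℕ} [hp : Fact p.Prime] (t : ℤ_[p]ˣ) (ht : redHom p t = 1)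
    (hf : IsOfFinOrder t) : ∃ k : ℕ, t ^ p ^ k = 1 := by
  obtain ⟨m, hm, h⟩ := isOfFinOrder_iff_pow_eq_one.mp hf
  obtain ⟨k, m', hm', rfl⟩ := Nat.exists_eq_pow_mul_and_not_dvd hm.ne' p hp.out.ne_one
  refine ⟨k, eq_one_of_pow _ (by rw [map_pow, ht, one_pow]) m' hm' (by rw [← pow_mul, h])⟩

lemma eq_one_of_ppow {p : ℕ} [hp : Fact p.Prime] {Γ : Type*} [CommGroup Γ] [Finite Γ]
    (hΓ : ¬ (p ∣ Nat.card Γ)) (g : Γ) (k : ℕ) (h : g ^ p ^ k = 1) : g = 1 := by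
  have hc : Nat.Coprime (p ^ k) (Nat.card Γ) :=
    Nat.Coprime.pow_left _ ((Nat.Prime.coprime_iff_not_dvd hp.out).mpr hΓ)
  rw [← orderOf_eq_one_iff]
  exact Nat.eq_one_of_dvd_coprimes hc (orderOf_dvd_of_pow_eq_one h) (orderOf_dvd_natCard g)

noncomputable abbrev toQ (p : ℕ) [Fact p.Prime] : ℤ_[p]ˣ →* ℚ_[p]ˣ :=
  Units.map (PadicInt.Coe.ringHom (p := p)).toMonoidHom

noncomputable abbrev pU (p : ℕ) [hp : Fact p.Prime] : ℚ_[p]ˣ :=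
  Units.mk0 (p : ℚ_[p]) (by exact_mod_cast hp.out.ne_zero)

lemma toQ_injective (p : ℕ) [Fact p.Prime] : Function.Injective (toQ p) := fun _ _ h =>
  Units.ext (PadicInt.ext (congrArg Units.val h))

lemma exists_unitPart {p : ℕ} [hp : Fact p.Prime] (x : ℚ_[p]ˣ) :
    ∃ u : ℤ_[p]ˣ, x = pU p ^ (x : ℚ_[p]).valuation * toQ p u := by
  have h : ‖((pU p ^ (-(x : ℚ_[p]).valuation) * x : ℚ_[p]ˣ) : ℚ_[p])‖ = 1 := by
    have hp0 : (p : ℝ) ≠ 0 := by exact_mod_cast hp.out.ne_zero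
    simp [Padic.norm_eq_zpow_neg_valuation x.ne_zero]
    exact mul_inv_cancel₀ (zpow_ne_zero _ hp0)
  refine ⟨PadicInt.mkUnits h, ?_⟩
  have : toQ p (PadicInt.mkUnits h) = pU p ^ (-(x : ℚ_[p]).valuation) * x := Units.ext rfl
  rw [this, zpow_neg, mul_inv_cancel_left]

noncomputable def unitPart (p : ℕ) [Fact p.Prime] : ℚ_[p]ˣ →* ℤ_[p]ˣ :=
  MonoidHom.mk' (fun x => (exists_unitPart x).choose) (by
    intro a b
    have key : ∀ x : ℚ_[p]ˣ, toQ p (exists_unitPart x).choose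
        = (pU p ^ (x : ℚ_[p]).valuation)⁻¹ * x := fun x =>
      eq_inv_mul_of_mul_eq (exists_unitPart x).choose_spec.symm
    apply toQ_injective
    rw [map_mul, key, key, key, Units.val_mul, Padic.valuation_mul a.ne_zero b.ne_zero, zpow_add,
      mul_inv, mul_mul_mul_comm])

lemma unitPart_spec {p : ℕ} [Fact p.Prime] (x : ℚ_[p]ˣ) :
    x = pU p ^ (x : ℚ_[p]).valuation * toQ p (unitPart p x) := (exists_unitPart x).choose_spec

lemma hom_one_unit {p : ℕ} [hp : Fact p.Prime] {Γ : Type*} [CommGroup Γ] [Finite Γ]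
    [TopologicalSpace Γ] [DiscreteTopology Γ] (hΓ : ¬ (p ∣ Nat.card Γ))
    (f : ℚ_[p]ˣ →* Γ) (hf : Continuous f) (u : ℤ_[p]ˣ) (hu : redHom p u = 1) :
    f (toQ p u) = 1 := by
  have hlim : Filter.Tendsto (fun k : ℕ => toQ p u ^ p ^ k) Filter.atTop (nhds 1) := by
    rw [Units.isEmbedding_val₀.tendsto_nhds_iff, tendsto_iff_norm_sub_tendsto_zero]
    have hdvd : (p : ℤ_[p]) ∣ (u : ℤ_[p]) - 1 := by
      rw [← PadicInt.norm_lt_one_iff_dvd]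
      simpa using (redHom_eq_iff u 1).mp (by simpa using hu)
    refine squeeze_zero (g := fun k : ℕ => ((p : ℝ)⁻¹) ^ k) (fun _ => norm_nonneg _) ?_ ?_
    · intro k
      have h := dvd_sub_pow_of_dvd_sub hdvd k
      rw [one_pow] at h
      have h2 : ‖(u : ℤ_[p]) ^ p ^ k - 1‖ ≤ (p : ℝ) ^ (-(k + 1 : ℕ) : ℤ) := by
        rw [PadicInt.norm_le_pow_iff_mem_span_pow, Ideal.mem_span_singleton]; exact h
      have h3 : ‖(u : ℤ_[p]) ^ p ^ k - 1‖ ≤ (p : ℝ) ^ (-(k : ℕ) : ℤ) := 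
        h2.trans (zpow_le_zpow_right₀ (by exact_mod_cast hp.out.one_lt.le) (by simp))
      rw [inv_pow, ← zpow_natCast, ← zpow_neg]
      exact h3
    · exact tendsto_pow_atTop_nhds_zero_of_lt_one (by positivity)
        (inv_lt_one_of_one_lt₀ (by exact_mod_cast hp.out.one_lt))
  have h1 := (hf.tendsto 1).comp hlim
  rw [map_one, nhds_discrete, Filter.tendsto_pure] at h1
  obtain ⟨k, hk⟩ := h1.exists
  refine eq_one_of_ppow hΓ _ k ?_
  simpa using hk

end

/-- For a prime `p` and a finite abelian group `Γ` (discrete) of order prime to `p`, the map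
sending a continuous group homomorphism `f : ℚ_pˣ → Γ` to the pair consisting of `f(p)` and the
restriction of `f` to the torsion subgroup of `ℤ_pˣ` is a bijection onto
`Γ × Hom(torsion(ℤ_pˣ), Γ)`. -/
theorem continuous_hom_padic_units_equiv
    {p : ℕ} [Fact p.Prime] (Γ : Type*) [CommGroup Γ] [Finite Γ]
    [TopologicalSpace Γ] [DiscreteTopology Γ]
    (hΓ : ¬ (p ∣ Nat.card Γ)) :
    Function.Bijective
      (fun f : {f : ℚ_[p]ˣ →* Γ // Continuous f} =>
        ((f : ℚ_[p]ˣ →* Γ)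
            (Units.mk0 (p : ℚ_[p]) (by exact_mod_cast (Fact.out : p.Prime).ne_zero)),
         (f : ℚ_[p]ˣ →* Γ).comp
            ((Units.map (PadicInt.Coe.ringHom (p := p)).toMonoidHom).comp
              (CommGroup.torsion ℤ_[p]ˣ).subtype))
        : {f : ℚ_[p]ˣ →* Γ // Continuous f} → Γ × (CommGroup.torsion ℤ_[p]ˣ →* Γ)) := by
  constructor
  · rintro ⟨f, hf⟩ ⟨g, hg⟩ h
    obtain ⟨h1, h2⟩ := Prod.mk.inj h
    replace h1 : f (pU p) = g (pU p) := h1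
    have h3 : ∀ t ∈ CommGroup.torsion ℤ_[p]ˣ, f (toQ p t) = g (toQ p t) := fun t ht =>
      DFunLike.congr_fun h2 ⟨t, ht⟩
    refine Subtype.ext (MonoidHom.ext fun x => ?_)
    change f x = g x
    have key : ∀ u : ℤ_[p]ˣ, f (toQ p u) = g (toQ p u) := by
      intro u
      have e : u = teich p u * (u / teich p u) := by rw [mul_div_cancel]
      have hr : redHom p (u / teich p u) = 1 := by rw [_root_.map_div, red_teich, div_self']
      rw [e, map_mul, map_mul, map_mul, hom_one_unit hΓ f hf _ hr, hom_one_unit hΓ g hg _ hr,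
        h3 _ (teich_tors u)]
    rw [unitPart_spec x, map_mul, map_mul, map_zpow, map_zpow, h1, key]
  · rintro ⟨γ, φ⟩
    let ψ : ℤ_[p]ˣ →* Γ := φ.comp ((teich p).codRestrict _ teich_tors)
    let f : ℚ_[p]ˣ →* Γ := MonoidHom.mk'
      (fun x => γ ^ (x : ℚ_[p]).valuation * ψ (unitPart p x)) (by
        intro a b
        rw [Units.val_mul, Padic.valuation_mul a.ne_zero b.ne_zero, zpow_add, map_mul, map_mul,
          mul_mul_mul_comm])
    have hfv : ∀ x, f x = γ ^ (x : ℚ_[p]).valuation * ψ (unitPart p x) := fun _ => rfl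
    have hval : ∀ u : ℤ_[p]ˣ, ((toQ p u : ℚ_[p]ˣ) : ℚ_[p]).valuation = 0 := by
      intro u
      change ((u : ℤ_[p]) : ℚ_[p]).valuation = 0
      have h1 := Padic.norm_eq_zpow_neg_valuation (toQ p u).ne_zero
      have h2 : ‖((toQ p u : ℚ_[p]ˣ) : ℚ_[p])‖ = 1 := PadicInt.norm_units u
      rw [h2, eq_comm, zpow_eq_one_iff_right₀ (by positivity)
        (by exact_mod_cast (Fact.out : p.Prime).ne_one)] at h1
      exact neg_eq_zero.mp h1
    have hunit : ∀ u : ℤ_[p]ˣ, unitPart p (toQ p u) = u := by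
      intro u
      apply toQ_injective
      have := unitPart_spec (toQ p u)
      rw [hval, zpow_zero, one_mul] at this
      exact this.symm
    have hfu : ∀ u, f (toQ p u) = ψ u := by
      intro u
      rw [hfv, hval, hunit, zpow_zero, one_mul]
    have hψ1 : ∀ u, redHom p u = 1 → ψ u = 1 := by
      intro u hu
      have : (teich p).codRestrict _ teich_tors u = 1 := Subtype.ext (teich_one_unit u hu)
      change φ _ = 1
      rw [this, map_one]
    refine ⟨⟨f, ?_⟩, ?_⟩
    · apply continuous_of_continuousAt_one
      rw [ContinuousAt, map_one, nhds_discrete Γ, Filter.tendsto_pure]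
      have hc : Filter.Tendsto (fun x : ℚ_[p]ˣ => (x : ℚ_[p])) (nhds 1) (nhds 1) :=
        Units.continuous_val.tendsto 1
      filter_upwards [hc.eventually (Metric.ball_mem_nhds (1 : ℚ_[p]) one_pos)] with x hx
      rw [dist_eq_norm] at hx
      have hx1 : ‖(x : ℚ_[p])‖ = 1 := by
        have h := Padic.norm_eq_of_norm_add_lt_right (p := p) (z1 := (x : ℚ_[p])) (z2 := -1)
          (by rw [← sub_eq_add_neg, norm_neg, norm_one]; exact hx)
        rw [h, norm_neg, norm_one]
      have e : x = toQ p (PadicInt.mkUnits hx1) := Units.ext rfl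
      rw [e, hfu]
      apply hψ1
      rw [← map_one (redHom p), redHom_eq_iff]
      exact hx
    · refine Prod.ext ?_ (MonoidHom.ext ?_)
      · change f (pU p) = γ
        have hv : ((pU p : ℚ_[p]ˣ) : ℚ_[p]).valuation = 1 := by simp
        have hu : unitPart p (pU p) = 1 := by
          apply toQ_injective
          have := unitPart_spec (pU p)
          rw [hv, zpow_one] at this
          simpa using this
        rw [hfv, hv, hu]; simp
      · rintro ⟨t, ht⟩
        change f (toQ p t) = φ ⟨t, ht⟩
        rw [hfu]
        change φ _ = _
        rw [← div_eq_one, ← _root_.map_div]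
        have hr : redHom p (teich p t / t) = 1 := by rw [_root_.map_div, red_teich, div_self']
        obtain ⟨k, hk⟩ := tors_ppow _ hr ((CommGroup.torsion ℤ_[p]ˣ).div_mem (teich_tors t) ht)
        refine eq_one_of_ppow hΓ _ k ?_
        rw [← map_pow, ← map_one φ]
        congr 1
        exact Subtype.ext hk
end

section
/- Let p be a prime, d a positive integer dividing p − 1, and e an integer with 1 ≤ e ≤ d. Let μ be the Haar measure on the additive group ℚ_p normalized so that μ(ℤ_p) = 1, and let S = { z^d · p^e : z ∈ ℤ_p } ⊆ ℚ_p. Then ∫_S ‖x‖_p^{(1−d)/d} dμ(x) = (1/d) · p^{−e/d}, where ‖·‖_p is the p-adic norm (valued in the nonnegative reals) and the exponents denote real powers. -/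
open MeasureTheory

namespace OrbVol

variable {p : ℕ} [hp : Fact p.Prime]

/-- The ball `p^n ℤ_p`. -/
def B (p : ℕ) [Fact p.Prime] (n : ℕ) : Set ℚ_[p] := {x | ∃ u : ℤ_[p], (p : ℚ_[p]) ^ n * u = x}

/-- The elements `p^n u` with `u ∈ ℤ_p` reducing to `a`. -/
def V (p : ℕ) [Fact p.Prime] (n : ℕ) (a : ZMod p) : Set ℚ_[p] :=
  {x | ∃ u : ℤ_[p], PadicInt.toZMod u = a ∧ (p : ℚ_[p]) ^ n * u = x}

lemma toZMod_eq_zero_iff (u : ℤ_[p]) : PadicInt.toZMod u = 0 ↔ ∃ v : ℤ_[p], u = p * v := by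
  rw [← RingHom.mem_ker, PadicInt.ker_toZMod, PadicInt.maximalIdeal_eq_span_p,
    Ideal.mem_span_singleton]
  rfl

lemma toZMod_ne_zero_iff (u : ℤ_[p]) : PadicInt.toZMod u ≠ 0 ↔ ‖u‖ = 1 := by
  rw [← PadicInt.isUnit_iff, Ne, ← RingHom.mem_ker, PadicInt.ker_toZMod]
  simp

lemma toZMod_lift (a : ZMod p) : PadicInt.toZMod ((a.val : ℤ_[p])) = a := by
  simp

lemma B_measurable [MeasurableSpace ℚ_[p]] [BorelSpace ℚ_[p]] (n : ℕ) : MeasurableSet (B p n) := by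
  have : IsCompact (Set.range (fun u : ℤ_[p] => (p : ℚ_[p]) ^ n * u)) :=
    isCompact_range (by fun_prop)
  exact this.measurableSet

lemma V_eq (n : ℕ) (a : ZMod p) :
    V p n a = (fun x => x + -((p : ℚ_[p]) ^ n * (a.val : ℚ_[p]))) ⁻¹' (B p (n + 1)) := by
  ext x
  constructor
  · rintro ⟨u, hu, rfl⟩
    obtain ⟨v, hv⟩ := (toZMod_eq_zero_iff (u - (a.val : ℤ_[p]))).1 (by simp [hu])
    refine ⟨v, ?_⟩
    have : (u : ℚ_[p]) - (a.val : ℚ_[p]) = p * v := by exact_mod_cast congrArg (Subtype.val) hv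
    linear_combination (-(p : ℚ_[p]) ^ n) * this
  · rintro ⟨v, hv⟩
    refine ⟨a.val + p * v, by simp, ?_⟩
    push_cast
    linear_combination hv

lemma V_measurable [MeasurableSpace ℚ_[p]] [BorelSpace ℚ_[p]] (n : ℕ) (a : ZMod p) :
    MeasurableSet (V p n a) := by
  rw [V_eq]
  exact (B_measurable _).preimage (measurable_add_const _)

lemma p_ne : (p : ℚ_[p]) ≠ 0 := by exact_mod_cast hp.out.ne_zero

lemma V_disj (n : ℕ) : Pairwise (Function.onFun Disjoint (V p n)) := by
  intro a b hab
  rw [Function.onFun, Set.disjoint_left]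
  rintro x ⟨u, hu, rfl⟩ ⟨v, hv, h⟩
  apply hab
  have : (v : ℚ_[p]) = u := mul_left_cancel₀ (pow_ne_zero _ p_ne) h
  have : v = u := Subtype.ext this
  rw [← hu, ← hv, this]

lemma B_eq (n : ℕ) : B p n = ⋃ a, V p n a := by
  ext x
  simp only [Set.mem_iUnion]
  constructor
  · rintro ⟨u, rfl⟩
    exact ⟨_, u, rfl, rfl⟩
  · rintro ⟨a, u, -, rfl⟩
    exact ⟨u, rfl⟩

section
variable [MeasurableSpace ℚ_[p]] [BorelSpace ℚ_[p]] (μ : Measure ℚ_[p]) [μ.IsAddHaarMeasure]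

lemma V_meas (n : ℕ) (a : ZMod p) : μ (V p n a) = μ (B p (n + 1)) := by
  rw [V_eq, measure_preimage_add_right]

lemma B_succ (n : ℕ) : μ (B p n) = p * μ (B p (n + 1)) := by
  have : Fintype (ZMod p) := ZMod.fintype p
  rw [B_eq, measure_iUnion (V_disj n) (V_measurable n)]
  simp [V_meas, tsum_fintype, ZMod.card]

lemma B_meas (hμ : μ {x : ℚ_[p] | ‖x‖ ≤ 1} = 1) (n : ℕ) :
    μ (B p n) = ENNReal.ofReal ((p : ℝ) ^ (-(n : ℝ))) := by
  have hp0 : (0 : ℝ) < p := by exact_mod_cast hp.out.pos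
  induction n with
  | zero =>
    have : B p 0 = {x : ℚ_[p] | ‖x‖ ≤ 1} := by
      ext x
      constructor
      · rintro ⟨u, rfl⟩
        simpa using u.2
      · intro h
        exact ⟨⟨x, h⟩, by simp⟩
    simp [this, hμ]
  | succ n ih =>
    rw [B_succ] at ih
    have h : ENNReal.ofReal ((p : ℝ) ^ (-(n : ℝ)))
        = p * ENNReal.ofReal ((p : ℝ) ^ (-((n + 1 : ℕ) : ℝ))) := by
      rw [← ENNReal.ofReal_natCast, ← ENNReal.ofReal_mul hp0.le]
      congr 1
      push_cast
      rw [neg_add, Real.rpow_add hp0, Real.rpow_neg_one]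
      field_simp
    rw [h] at ih
    exact (ENNReal.mul_right_inj (by exact_mod_cast hp.out.ne_zero) (by simp)).1 ih
end

lemma hensel (d : ℕ) (hd : 0 < d) (hdvd : d ∣ (p - 1)) (u : ℤ_[p]) (b : ZMod p) (hb : b ≠ 0)
    (hu : PadicInt.toZMod u = b ^ d) : ∃ z : ℤ_[p], z ^ d = u := by
  have hp1 := hp.out.one_lt
  have hdp : d < p := by
    have := Nat.le_of_dvd (by omega) hdvd
    omega
  have hd0 : (d : ZMod p) ≠ 0 := by
    rw [Ne, ZMod.natCast_eq_zero_iff]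
    exact fun h => absurd (Nat.le_of_dvd hd h) (by omega)
  let F : Polynomial ℤ_[p] := Polynomial.X ^ d - Polynomial.C u
  have h1 : ‖F.derivative.aeval (b.val : ℤ_[p])‖ = 1 := by
    rw [← toZMod_ne_zero_iff]
    simp [F, Polynomial.derivative_X_pow, hd0, hb]
  have h2 : ‖F.aeval (b.val : ℤ_[p])‖ < 1 := by
    refine lt_of_le_of_ne (PadicInt.norm_le_one _) ?_
    rw [Ne, ← toZMod_ne_zero_iff]
    simp [F, hu]
  obtain ⟨z, hz, -⟩ := hensels_lemma (F := F) (a := (b.val : ℤ_[p])) (by rw [h1]; simpa using h2)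
  refine ⟨z, ?_⟩
  simpa [F, sub_eq_zero] using hz

/-- The nonzero `d`-th powers in `ZMod p`. -/
noncomputable def A (p : ℕ) [Fact p.Prime] (d : ℕ) : Finset (ZMod p) :=
  letI := Classical.decEq (ZMod p)
  (Finset.univ : Finset (ZMod p)ˣ).image (fun b : (ZMod p)ˣ => (b : ZMod p) ^ d)

lemma mem_A (d : ℕ) (a : ZMod p) : a ∈ A p d ↔ ∃ b : (ZMod p)ˣ, (b : ZMod p) ^ d = a := by
  simp [A]

lemma card_A (d : ℕ) (hdvd : d ∣ (p - 1)) : (A p d).card = (p - 1) / d := by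
  have h := IsCyclic.card_powMonoidHom_range (G := (ZMod p)ˣ) d
  rw [Nat.card_eq_fintype_card (α := (ZMod p)ˣ), ZMod.card_units, Nat.gcd_eq_right hdvd] at h
  have h2 : ((A p d : Finset (ZMod p)) : Set (ZMod p))
      = Set.image Units.val ((powMonoidHom d : (ZMod p)ˣ →* (ZMod p)ˣ).range : Set (ZMod p)ˣ) := by
    ext a
    simp [mem_A]
  rw [← h, ← Set.ncard_coe_finset, h2, Set.ncard_image_of_injective _ Units.val_injective]
  rfl

/-- The shell of valuation `e + d k` in `S`. -/
def W (p : ℕ) [Fact p.Prime] (d e k : ℕ) : Set ℚ_[p] := ⋃ a ∈ A p d, V p (e + d * k) a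

lemma norm_W {d e k : ℕ} {x : ℚ_[p]} (hx : x ∈ W p d e k) :
    ‖x‖ = (p : ℝ) ^ (-((e : ℝ) + d * k)) := by
  simp only [W, Set.mem_iUnion] at hx
  obtain ⟨a, ha, u, hu, rfl⟩ := hx
  obtain ⟨b, rfl⟩ := (mem_A d a).1 ha
  have : ‖u‖ = 1 := by
    rw [← toZMod_ne_zero_iff, hu]
    exact pow_ne_zero _ b.ne_zero
  rw [norm_mul, norm_pow, Padic.norm_p, PadicInt.padic_norm_e_of_padicInt, this, mul_one,
    Real.rpow_neg (by positivity), inv_pow]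
  congr 1
  exact_mod_cast (Real.rpow_natCast (p : ℝ) (e + d * k)).symm

lemma S_eq (d e : ℕ) (hd : 0 < d) (hdvd : d ∣ (p - 1)) :
    {x : ℚ_[p] | ∃ z : ℤ_[p], (z : ℚ_[p]) ^ d * (p : ℚ_[p]) ^ e = x}
      = insert 0 (⋃ k, W p d e k) := by
  ext x
  simp only [W, Set.mem_insert_iff, Set.mem_iUnion, Set.mem_ofPred_eq]
  constructor
  · rintro ⟨z, rfl⟩
    by_cases hz : z = 0
    · left
      simp [hz, hd.ne']
    · right
      refine ⟨z.valuation, _, (mem_A d _).2 ⟨Units.map PadicInt.toZMod.toMonoidHom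
        (PadicInt.unitCoeff hz), rfl⟩, (PadicInt.unitCoeff hz : ℤ_[p]) ^ d, by simp, ?_⟩
      conv_rhs => rw [PadicInt.unitCoeff_spec hz]
      push_cast
      ring
  · rintro (rfl | ⟨k, a, ha, u, hu, rfl⟩)
    · exact ⟨0, by simp [hd.ne']⟩
    · obtain ⟨b, rfl⟩ := (mem_A d a).1 ha
      obtain ⟨z, rfl⟩ := hensel d hd hdvd u b b.ne_zero hu
      refine ⟨z * p ^ k, ?_⟩
      push_cast
      ring

lemma W_disj (d e : ℕ) (hd : 0 < d) : Pairwise (Function.onFun Disjoint (W p d e)) := by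
  intro k l hkl
  rw [Function.onFun, Set.disjoint_left]
  intro x hx hy
  have h := (norm_W hx).symm.trans (norm_W hy)
  have hp1 : (1 : ℝ) < p := by exact_mod_cast hp.out.one_lt
  have h2 := (Real.strictMono_rpow_of_base_gt_one hp1).injective h
  apply hkl
  have hd' : (d : ℝ) ≠ 0 := by exact_mod_cast hd.ne'
  have : (d : ℝ) * k = d * l := by linarith
  exact_mod_cast mul_left_cancel₀ hd' this

section
variable [MeasurableSpace ℚ_[p]] [BorelSpace ℚ_[p]] (μ : Measure ℚ_[p]) [μ.IsAddHaarMeasure]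

lemma W_measurable (d e k : ℕ) : MeasurableSet (W p d e k) :=
  Finset.measurableSet_biUnion _ fun a _ => V_measurable _ a

lemma W_meas (hμ : μ {x : ℚ_[p] | ‖x‖ ≤ 1} = 1) (d e k : ℕ) (hd : 0 < d) (hdvd : d ∣ (p - 1)) :
    μ (W p d e k) =
      ENNReal.ofReal (((p : ℝ) - 1) / d * (p : ℝ) ^ (-((e : ℝ) + d * k + 1))) := by
  rw [W, measure_biUnion_finset (fun a _ b _ hab => V_disj _ hab) (fun a _ => V_measurable _ a)]
  simp only [V_meas, B_meas μ hμ, Finset.sum_const, card_A d hdvd, nsmul_eq_mul]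
  have hd' : (d : ℝ) ≠ 0 := by exact_mod_cast hd.ne'
  rw [← ENNReal.ofReal_natCast, ← ENNReal.ofReal_mul (by positivity), Nat.cast_div hdvd hd',
    Nat.cast_sub hp.out.one_lt.le]
  push_cast
  rfl
end

end OrbVol

open OrbVol in
theorem integral_padic_orbifold_volume
    {p : ℕ} [Fact p.Prime] [MeasurableSpace ℚ_[p]] [BorelSpace ℚ_[p]]
    (d e : ℕ) (hd : 0 < d) (hdvd : d ∣ (p - 1)) (he1 : 1 ≤ e) (he2 : e ≤ d)
    (μ : Measure ℚ_[p]) [μ.IsAddHaarMeasure]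
    (hμ : μ {x : ℚ_[p] | ‖x‖ ≤ 1} = 1) :
    ∫ x in {x : ℚ_[p] | ∃ z : ℤ_[p], (z : ℚ_[p]) ^ d * (p : ℚ_[p]) ^ e = x},
        ‖x‖ ^ ((1 - (d : ℝ)) / (d : ℝ)) ∂μ
      = (1 / (d : ℝ)) * (p : ℝ) ^ (-(e : ℝ) / (d : ℝ)) := by
  have hp : Fact p.Prime := inferInstance
  have hp1 : (1 : ℝ) < p := by exact_mod_cast hp.out.one_lt
  have hp0 : (0 : ℝ) < p := by linarith
  have hd' : (d : ℝ) ≠ 0 := by exact_mod_cast hd.ne'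
  have hdpos : (0 : ℝ) < d := by exact_mod_cast hd
  rw [S_eq d e hd hdvd, setIntegral_congr_set (insert_ae_eq_self 0 _)]
  set f : ℚ_[p] → ℝ := fun x => ‖x‖ ^ ((1 - (d : ℝ)) / (d : ℝ)) with hf
  have hfW : ∀ k : ℕ, Set.EqOn f
      (fun _ => ((p : ℝ) ^ (-((e : ℝ) + d * k))) ^ ((1 - (d : ℝ)) / (d : ℝ))) (W p d e k) := by
    intro k x hx
    simp only [hf, norm_W hx]
  have hfin : ∀ k, μ (W p d e k) ≠ ⊤ := fun k => by
    rw [W_meas μ hμ d e k hd hdvd]; exact ENNReal.ofReal_ne_top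
  have hI : ∀ k, ∫ x in W p d e k, f x ∂μ
      = ((1 / (d : ℝ)) * (p : ℝ) ^ (-(e : ℝ) / (d : ℝ))) * (1 - (p : ℝ)⁻¹) * ((p : ℝ)⁻¹) ^ k := by
    intro k
    rw [setIntegral_congr_fun (W_measurable d e k) (hfW k), setIntegral_const, Measure.real,
      W_meas μ hμ d e k hd hdvd, ENNReal.toReal_ofReal
        (mul_nonneg (div_nonneg (by linarith) hdpos.le) (by positivity)), smul_eq_mul,
      ← Real.rpow_mul hp0.le]
    have e1 : (p : ℝ) ^ (-((e : ℝ) + d * k + 1))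
        * (p : ℝ) ^ ((-((e : ℝ) + d * k)) * ((1 - (d : ℝ)) / (d : ℝ)))
        = (p : ℝ) ^ (-(e : ℝ) / (d : ℝ)) * (p : ℝ)⁻¹ * ((p : ℝ)⁻¹) ^ k := by
      rw [← Real.rpow_natCast, ← Real.rpow_neg_one, ← Real.rpow_mul hp0.le,
        ← Real.rpow_add hp0, ← Real.rpow_add hp0, ← Real.rpow_add hp0]
      congr 1
      field_simp
      ring
    rw [mul_assoc, e1]
    field_simp
  have hInt : ∀ k, IntegrableOn f (W p d e k) μ := fun k =>
    (integrableOn_const (C := ((p : ℝ) ^ (-((e : ℝ) + d * k))) ^ ((1 - (d : ℝ)) / (d : ℝ)))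
      (hfin k)).congr_fun (hfW k).symm (W_measurable d e k)
  have hsum : HasSum (fun k : ℕ => ((1 / (d : ℝ)) * (p : ℝ) ^ (-(e : ℝ) / (d : ℝ)))
      * (1 - (p : ℝ)⁻¹) * ((p : ℝ)⁻¹) ^ k) ((1 / (d : ℝ)) * (p : ℝ) ^ (-(e : ℝ) / (d : ℝ))) := by
    have h1 : (p : ℝ)⁻¹ < 1 := inv_lt_one_of_one_lt₀ hp1
    have := (hasSum_geometric_of_lt_one (by positivity) h1).mul_left
      (((1 / (d : ℝ)) * (p : ℝ) ^ (-(e : ℝ) / (d : ℝ))) * (1 - (p : ℝ)⁻¹))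
    rwa [mul_assoc _ (1 - (p : ℝ)⁻¹), mul_inv_cancel₀ (by linarith), mul_one] at this
  have hnorm : ∀ x, ‖f x‖ = f x := fun x =>
    Real.norm_of_nonneg (Real.rpow_nonneg (norm_nonneg _) _)
  have hU : IntegrableOn f (⋃ k, W p d e k) μ :=
    integrableOn_iUnion_of_summable_integral_norm hInt (by simpa only [hnorm, hI] using hsum.summable)
  have h2 := hasSum_integral_iUnion (W_measurable d e) (W_disj d e hd) hU
  simp only [hI] at h2
  exact h2.unique hsum
end

section
/- Let K be an algebraic closure of ℚ and let p be a prime. Call a family (s_r)_{r ≥ 2} of elements of K a compatible system of roots of p if s_r^r = p for all r ≥ 2 and s_{r·r′}^r = s_{r′} for all r, r′ ≥ 2. Then for any two compatible systems (s_r)_{r ≥ 2} and (s′_r)_{r ≥ 2} of roots of p there exists a field automorphism σ of K fixing ℚ such that σ(s_r) = s′_r for all r ≥ 2. -/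
open Polynomial in
theorem aux_irreducible (p : ℕ) (hp : p.Prime) (r : ℕ) (hr : 2 ≤ r) :
    Irreducible (X ^ r - C (p : ℚ)) := by
  have hm : (X ^ r - C (p : ℤ)).Monic := monic_X_pow_sub_C _ (by omega)
  have hpi : Prime (p : ℤ) := Nat.prime_iff_prime_int.mp hp
  have h : Irreducible (X ^ r - C (p : ℤ)) := by
    have hdeg : (X ^ r - C (p : ℤ)).natDegree = r := natDegree_X_pow_sub_C
    refine IsEisensteinAt.irreducible (𝓟 := Ideal.span {(p : ℤ)}) ⟨?_, ?_, ?_⟩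
      ((Ideal.span_singleton_prime hpi.ne_zero).mpr hpi) hm.isPrimitive (by omega)
    · rw [hm.leadingCoeff, Ideal.mem_span_singleton]
      exact fun h => hpi.not_isUnit (isUnit_of_dvd_one h)
    · intro n hn
      rw [hdeg] at hn
      rw [coeff_sub, coeff_X_pow, if_neg (by omega), coeff_C, Ideal.mem_span_singleton]
      split_ifs <;> simp
    · rw [coeff_sub, coeff_X_pow, if_neg (by omega), coeff_C_zero, Ideal.span_singleton_pow,
        Ideal.mem_span_singleton, zero_sub, dvd_neg, sq]
      intro h
      have := (mul_dvd_mul_iff_left (a := (p : ℤ)) (b := p) (c := 1) hpi.ne_zero).mp (by simpa using h)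
      exact hpi.not_isUnit (isUnit_of_dvd_one this)
  have := (hm.irreducible_iff_irreducible_map_fraction_map (K := ℚ)).mp h
  simpa using this

open Polynomial in
/-- Let `K` be an algebraic closure of `ℚ` and `p` a prime. Any two compatible systems
`(s_r)_{r ≥ 2}` of roots of `p` in `K` (i.e. `s_r^r = p` and `s_{r·r'}^r = s_{r'}`) differ by
a field automorphism of `K` fixing `ℚ`. -/
theorem compatible_systems_of_roots_conjugate
    (K : Type*) [Field K] [Algebra ℚ K] [IsAlgClosure ℚ K]
    (p : ℕ) (hp : p.Prime)
    (s s' : ℕ → K)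
    (hs : ∀ r ≥ 2, s r ^ r = (p : K))
    (hs' : ∀ r ≥ 2, s' r ^ r = (p : K))
    (hcs : ∀ r ≥ 2, ∀ r' ≥ 2, s (r * r') ^ r = s r')
    (hcs' : ∀ r ≥ 2, ∀ r' ≥ 2, s' (r * r') ^ r = s' r') :
    ∃ σ : K ≃ₐ[ℚ] K, ∀ r ≥ 2, σ (s r) = s' r := by
  have : Algebra.IsAlgebraic ℚ K := IsAlgClosure.isAlgebraic
  have : Normal ℚ K := IsAlgClosure.normal ℚ K
  have : IsGalois ℚ K := {}
  have hne : ∀ r ≥ 2, ∃ σ : K ≃ₐ[ℚ] K, σ (s r) = s' r := by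
    intro r hr
    have hmin : minpoly ℚ (s r) = X ^ r - C (p : ℚ) :=
      (minpoly.eq_of_irreducible_of_monic (aux_irreducible p hp r hr)
        (by simp [hs r hr]) (monic_X_pow_sub_C _ (by omega))).symm
    exact minpoly.exists_algEquiv_of_root' (Algebra.IsAlgebraic.isAlgebraic _)
      (by rw [hmin]; simp [hs' r hr])
  let T : {r : ℕ // 2 ≤ r} → Set (K ≃ₐ[ℚ] K) := fun r => {σ | σ (s r) = s' r}
  have hcl : ∀ r, IsClosed (T r) := by
    rintro ⟨r, hr⟩
    obtain ⟨τ, hτ⟩ := hne r hr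
    have h1 := InfiniteGalois.fixingSubgroup_isClosed (IntermediateField.adjoin ℚ {s r})
    have h2 := h1.preimage (continuous_const_mul τ⁻¹)
    convert h2 using 1
    ext σ
    have : τ⁻¹ * σ ∈ (IntermediateField.adjoin ℚ {s r}).fixingSubgroup ↔
        (τ⁻¹ * σ) (s r) = s r := by
      rw [IntermediateField.mem_fixingSubgroup_iff]
      simpa using IntermediateField.forall_mem_adjoin_smul_eq_self_iff ℚ (S := {s r}) (τ⁻¹ * σ)
    change σ (s r) = s' r ↔ τ⁻¹ * σ ∈ (IntermediateField.adjoin ℚ {s r}).fixingSubgroup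
    rw [this, ← hτ, AlgEquiv.mul_apply, AlgEquiv.aut_inv, AlgEquiv.symm_apply_eq]
  have hdir : Directed (· ⊇ ·) T := by
    rintro ⟨a, ha⟩ ⟨b, hb⟩
    refine ⟨⟨a * b, by nlinarith⟩, ?_, ?_⟩
    · intro σ (hσ : σ (s (a * b)) = s' (a * b))
      change σ (s a) = s' a
      rw [← hcs b hb a ha, ← hcs' b hb a ha, map_pow, mul_comm b a, hσ]
    · intro σ (hσ : σ (s (a * b)) = s' (a * b))
      change σ (s b) = s' b
      rw [← hcs a ha b hb, ← hcs' a ha b hb, map_pow, hσ]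
  have : Nonempty {r : ℕ // 2 ≤ r} := ⟨⟨2, le_rfl⟩⟩
  obtain ⟨σ, hσ⟩ := IsCompact.nonempty_iInter_of_directed_nonempty_isCompact_isClosed T hdir
    (fun r => hne r r.2) (fun r => (hcl r).isCompact) hcl
  exact ⟨σ, fun r hr => Set.mem_iInter.mp hσ ⟨r, hr⟩⟩
end
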